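/- For every integer h ≥ 1 there exists a bi-Lipschitz embedding of T^ω_h into c₀ with distortion at most 2; in particular c_{c₀}(T^ω_h) ≤ 2. -/

import Mathlib

open Set Function Filter

open scoped ENNReal

attribute [local instance] Classical.propDecidable

noncomputable section

def LipUB {α β : Type*} (dα : α → α → ℝ) (dβ : β → β → ℝ) (f : α → β) (L : ℝ) : Prop :=
  ∀ a b : α, dβ (f a) (f b) ≤ L * dα a b

def CoLipUB {α β : Type*} (dα : α → α → ℝ) (dβ : β → β → ℝ) (f : α → β) (C : ℝ) : Prop :=
  ∀ a b : α, dα a b ≤ C * dβ (f a) (f b)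

def IsBiLipEmb {α β : Type*} (dα : α → α → ℝ) (dβ : β → β → ℝ) (f : α → β) : Prop :=
  Function.Injective f ∧ ∃ L C : ℝ, LipUB dα dβ f L ∧ CoLipUB dα dβ f C

def distortionSet (α β : Type*) (dα : α → α → ℝ) (dβ : β → β → ℝ) : Set ℝ :=
  {D | ∃ f : α → β, Function.Injective f ∧ ∃ L C : ℝ,
    LipUB dα dβ f L ∧ CoLipUB dα dβ f C ∧ D = L * C}

def cDist (α β : Type*) (dα : α → α → ℝ) (dβ : β → β → ℝ) : ℝ≥0∞ :=
  ⨅ D ∈ distortionSet α β dα dβ, ENNReal.ofReal D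
def lcpLen : List ℕ → List ℕ → ℕ
  | a :: x, b :: y => if a = b then lcpLen x y + 1 else 0
  | _, _ => 0

def treeDist (x y : List ℕ) : ℝ :=
  (x.length : ℝ) + (y.length : ℝ) - 2 * (lcpLen x y : ℝ)

def TreeOmega (h : ℕ) : Type := {x : List ℕ // x.length ≤ h}

def tDist (h : ℕ) : TreeOmega h → TreeOmega h → ℝ := fun x y => treeDist x.1 y.1

/-!
Send a vertex `x` to the element `∑_{v ≤ x} (|x| - |v| + 1) e_v` of `c₀`, the sum running over the
prefixes `v` of `x`. With `n` the length of the longest common prefix of `x` and `y`,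
`ρ(x, y) = (|x| - n) + (|y| - n)`. On a common prefix the two images differ by `||x| - |y||`; any
other prefix `v` of `x` has `|v| > n`, so its coefficient is at most `|x| - n`. Hence the map is
`1`-Lipschitz. If `n < |x|`, the prefix of `x` of length `n + 1` has coefficient `|x| - n` in
the image of `x` and `0` in that of `y`, so the distance of the images is at least `|x| - n`,
likewise at least `|y| - n`, and therefore at least `ρ(x, y) / 2`.
-/

open scoped ZeroAtInfty

section Distortion

variable {α β γ : Type*} {dα : α → α → ℝ} {dβ : β → β → ℝ} {f : α → β} {L C : ℝ}

theorem LipUB.comp (hf : LipUB dα dβ f L) (g : γ → α) :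
    LipUB (fun a b => dα (g a) (g b)) dβ (f ∘ g) L :=
  fun a b => hf (g a) (g b)

theorem CoLipUB.comp (hf : CoLipUB dα dβ f C) (g : γ → α) :
    CoLipUB (fun a b => dα (g a) (g b)) dβ (f ∘ g) C :=
  fun a b => hf (g a) (g b)

theorem CoLipUB.injective (hf : CoLipUB dα dβ f C) (hα : ∀ a b, dα a b ≤ 0 → a = b)
    (hβ : ∀ b, dβ b b = 0) : Function.Injective f := by
  intro a b hab
  refine hα a b ((hf a b).trans ?_)
  rw [hab, hβ, mul_zero]

theorem cDist_le_ofReal (hf : Function.Injective f) (hL : LipUB dα dβ f L)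
    (hC : CoLipUB dα dβ f C) : cDist α β dα dβ ≤ ENNReal.ofReal (L * C) :=
  iInf₂_le (L * C) ⟨f, hf, L, C, hL, hC, rfl⟩

theorem cDist_comp_le {g : γ → α} (hg : Function.Injective g) :
    cDist γ β (fun a b => dα (g a) (g b)) dβ ≤ cDist α β dα dβ := by
  refine le_iInf₂ fun D ⟨f, hf, L, C, hL, hC, hD⟩ => ?_
  exact hD ▸ cDist_le_ofReal (hf.comp hg) (hL.comp g) (hC.comp g)

end Distortion

theorem zeroAtInfty_dist_le_iff {X E : Type*} [TopologicalSpace X] [Nonempty X]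
    [PseudoMetricSpace E] [Zero E] {f g : C₀(X, E)} {r : ℝ} :
    dist f g ≤ r ↔ ∀ x, dist (f x) (g x) ≤ r := by
  rw [← ZeroAtInftyContinuousMap.dist_toBCF_eq_dist,
    BoundedContinuousFunction.dist_le_iff_of_nonempty]
  rfl

section LongestCommonPrefix

theorem lcpLen_comm (x y : List ℕ) : lcpLen x y = lcpLen y x := by
  induction x generalizing y with
  | nil => cases y <;> simp only [lcpLen]
  | cons a x ih =>
    cases y with
    | nil => simp only [lcpLen]
    | cons b y => simp only [lcpLen, ih y, eq_comm]

theorem lcpLen_le_length_left (x y : List ℕ) : lcpLen x y ≤ x.length := by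
  fun_induction lcpLen x y <;> simp_all

theorem lcpLen_le_length_right (x y : List ℕ) : lcpLen x y ≤ y.length :=
  lcpLen_comm x y ▸ lcpLen_le_length_left y x

theorem prefix_iff_length_le_lcpLen {x v : List ℕ} (hv : v <+: x) (y : List ℕ) :
    v <+: y ↔ v.length ≤ lcpLen x y := by
  induction x generalizing y v with
  | nil => simp [List.prefix_nil.1 hv]
  | cons a x ih =>
    cases v with
    | nil => simp
    | cons c v =>
      obtain ⟨rfl, hvx⟩ := List.cons_prefix_cons.1 hv
      cases y with
      | nil => simp [lcpLen]
      | cons b y =>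
        rw [List.cons_prefix_cons, ih hvx]
        by_cases hcb : c = b <;> simp [lcpLen, hcb]

end LongestCommonPrefix

section TreeMetric

theorem treeDist_comm (x y : List ℕ) : treeDist x y = treeDist y x := by
  simp only [treeDist, lcpLen_comm x y, add_comm]

theorem treeDist_eq_add (x y : List ℕ) :
    treeDist x y = ((x.length : ℝ) - lcpLen x y) + ((y.length : ℝ) - lcpLen x y) := by
  rw [treeDist]
  ring

theorem length_sub_lcpLen_le_treeDist (x y : List ℕ) :
    (x.length : ℝ) - lcpLen x y ≤ treeDist x y := by
  have hy : (lcpLen x y : ℝ) ≤ y.length := mod_cast lcpLen_le_length_right x y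
  linarith [treeDist_eq_add x y]

theorem length_sub_length_le_treeDist (x y : List ℕ) :
    (x.length : ℝ) - y.length ≤ treeDist x y := by
  have hy : (lcpLen x y : ℝ) ≤ y.length := mod_cast lcpLen_le_length_right x y
  linarith [length_sub_lcpLen_le_treeDist x y]

theorem treeDist_nonneg (x y : List ℕ) : 0 ≤ treeDist x y := by
  have hx : (lcpLen x y : ℝ) ≤ x.length := mod_cast lcpLen_le_length_left x y
  linarith [length_sub_lcpLen_le_treeDist x y]

theorem eq_of_treeDist_nonpos {x y : List ℕ} (h : treeDist x y ≤ 0) : x = y := by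
  have hx : x.length ≤ lcpLen x y := by
    exact_mod_cast sub_nonpos.1 ((length_sub_lcpLen_le_treeDist x y).trans h)
  have hy : y.length ≤ x.length := by
    rw [treeDist_comm] at h
    exact_mod_cast sub_nonpos.1 ((length_sub_length_le_treeDist y x).trans h)
  exact ((prefix_iff_length_le_lcpLen List.prefix_rfl y).2 hx).eq_of_length_le hy

end TreeMetric

section PrefixWeight

/-- The coefficient of `e_v` in the image of the vertex `x` under the embedding into `c₀`: the
number of vertices on the path from `v` to `x` if `v` is a prefix of `x`, and `0` otherwise. -/
def prefixWeight (x v : List ℕ) : ℝ :=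
  if v <+: x then (x.length : ℝ) - v.length + 1 else 0

theorem prefixWeight_of_prefix {x v : List ℕ} (hv : v <+: x) :
    prefixWeight x v = x.length - v.length + 1 :=
  if_pos hv

theorem prefixWeight_of_not_prefix {x v : List ℕ} (hv : ¬v <+: x) : prefixWeight x v = 0 :=
  if_neg hv

theorem prefixWeight_nonneg (x v : List ℕ) : 0 ≤ prefixWeight x v := by
  by_cases hv : v <+: x
  · have hlen : (v.length : ℝ) ≤ x.length := mod_cast hv.length_le
    rw [prefixWeight_of_prefix hv]
    linarith
  · exact (prefixWeight_of_not_prefix hv).ge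

theorem prefixWeight_le_length_sub_lcpLen (x : List ℕ) {y v : List ℕ} (hy : ¬v <+: y) :
    prefixWeight x v ≤ x.length - lcpLen x y := by
  by_cases hx : v <+: x
  · have hlen : (lcpLen x y : ℝ) + 1 ≤ v.length := by
      rw [prefix_iff_length_le_lcpLen hx, not_le] at hy
      exact_mod_cast hy
    rw [prefixWeight_of_prefix hx]
    linarith
  · rw [prefixWeight_of_not_prefix hx, sub_nonneg]
    exact_mod_cast lcpLen_le_length_left x y

theorem prefixWeight_sub_le_treeDist (x y v : List ℕ) :
    prefixWeight x v - prefixWeight y v ≤ treeDist x y := by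
  by_cases hy : v <+: y
  · by_cases hx : v <+: x
    · rw [prefixWeight_of_prefix hx, prefixWeight_of_prefix hy]
      linarith [length_sub_length_le_treeDist x y]
    · rw [prefixWeight_of_not_prefix hx]
      linarith [prefixWeight_nonneg y v, treeDist_nonneg x y]
  · rw [prefixWeight_of_not_prefix hy, sub_zero]
    exact (prefixWeight_le_length_sub_lcpLen x hy).trans (length_sub_lcpLen_le_treeDist x y)

theorem dist_prefixWeight_le_treeDist (x y v : List ℕ) :
    dist (prefixWeight x v) (prefixWeight y v) ≤ treeDist x y :=
  abs_sub_le_iff.2 ⟨prefixWeight_sub_le_treeDist x y v,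
    treeDist_comm x y ▸ prefixWeight_sub_le_treeDist y x v⟩

theorem exists_length_sub_lcpLen_le_dist_prefixWeight (x y : List ℕ) :
    ∃ v, (x.length : ℝ) - lcpLen x y ≤ dist (prefixWeight x v) (prefixWeight y v) := by
  rcases (lcpLen_le_length_left x y).eq_or_lt with heq | hlt
  · exact ⟨[], by rw [heq, sub_self]; exact dist_nonneg⟩
  · have hx : x.take (lcpLen x y + 1) <+: x := List.take_prefix _ _
    have hlen : (x.take (lcpLen x y + 1)).length = lcpLen x y + 1 := List.length_take_of_le hlt
    have hy : ¬x.take (lcpLen x y + 1) <+: y := by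
      rw [prefix_iff_length_le_lcpLen hx, hlen]
      exact Nat.not_succ_le_self _
    refine ⟨x.take (lcpLen x y + 1), ?_⟩
    calc (x.length : ℝ) - lcpLen x y = prefixWeight x (x.take (lcpLen x y + 1)) := by
          rw [prefixWeight_of_prefix hx, hlen]
          push_cast
          ring
      _ ≤ dist (prefixWeight x (x.take (lcpLen x y + 1)))
            (prefixWeight y (x.take (lcpLen x y + 1))) := by
          rw [prefixWeight_of_not_prefix hy, Real.dist_0_eq_abs]
          exact le_abs_self _

theorem tendsto_prefixWeight_cofinite (x : List ℕ) :
    Tendsto (prefixWeight x) cofinite (nhds 0) := by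
  have hfin : {v | v <+: x}.Finite := by simpa using x.inits.finite_toSet
  refine tendsto_const_nhds.congr' ?_
  filter_upwards [hfin.compl_mem_cofinite] with v hv
  exact (prefixWeight_of_not_prefix hv).symm

end PrefixWeight

section Embedding

/-- The map `x ↦ ∑_{v ≤ x} (|x| - |v| + 1) e_v` from the countably branching tree of infinite height
to `c₀`. The basis of `c₀` is indexed by the vertices through Mathlib's bijection
`Denumerable.eqv (List ℕ) : List ℕ ≃ ℕ`. -/
def treeEmb (x : List ℕ) : C₀(ℕ, ℝ) where
  toFun n := prefixWeight x ((Denumerable.eqv (List ℕ)).symm n)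
  continuous_toFun := continuous_of_discreteTopology
  zero_at_infty' := by
    rw [cocompact_eq_cofinite]
    exact (tendsto_prefixWeight_cofinite x).comp
      (Denumerable.eqv (List ℕ)).symm.injective.tendsto_cofinite

theorem treeEmb_eqv (x v : List ℕ) :
    treeEmb x (Denumerable.eqv (List ℕ) v) = prefixWeight x v :=
  congrArg (prefixWeight x) (Equiv.symm_apply_apply _ v)

theorem dist_treeEmb_le_treeDist (x y : List ℕ) : dist (treeEmb x) (treeEmb y) ≤ treeDist x y :=
  zeroAtInfty_dist_le_iff.2 fun _ => dist_prefixWeight_le_treeDist x y _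

theorem length_sub_lcpLen_le_dist_treeEmb (x y : List ℕ) :
    (x.length : ℝ) - lcpLen x y ≤ dist (treeEmb x) (treeEmb y) := by
  obtain ⟨v, hv⟩ := exists_length_sub_lcpLen_le_dist_prefixWeight x y
  rw [← treeEmb_eqv x v, ← treeEmb_eqv y v] at hv
  exact hv.trans (zeroAtInfty_dist_le_iff.1 le_rfl _)

theorem treeDist_le_two_mul_dist_treeEmb (x y : List ℕ) :
    treeDist x y ≤ 2 * dist (treeEmb x) (treeEmb y) := by
  have hx := length_sub_lcpLen_le_dist_treeEmb x y
  have hy := length_sub_lcpLen_le_dist_treeEmb y x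
  rw [dist_comm, lcpLen_comm] at hy
  linarith [treeDist_eq_add x y]

theorem tree_into_c0_general :
    (∃ f : List ℕ → C₀(ℕ, ℝ), Function.Injective f ∧ LipUB treeDist dist f 1 ∧
      CoLipUB treeDist dist f 2) ∧
    cDist (List ℕ) C₀(ℕ, ℝ) treeDist dist ≤ 2 := by
  have hL : LipUB treeDist dist treeEmb 1 := fun x y =>
    (dist_treeEmb_le_treeDist x y).trans_eq (one_mul _).symm
  have hC : CoLipUB treeDist dist treeEmb 2 := treeDist_le_two_mul_dist_treeEmb
  have hinj : Function.Injective treeEmb :=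
    hC.injective (fun _ _ => eq_of_treeDist_nonpos) dist_self
  exact ⟨⟨treeEmb, hinj, hL, hC⟩, (cDist_le_ofReal hinj hL hC).trans (by simp)⟩

end Embedding

/-- for every `h ≥ 1` the tree `T^ω_h` embeds into `c₀` (the space
of real sequences vanishing at infinity with the sup norm) with distortion at
most 2; in particular `c_{c₀}(T^ω_h) ≤ 2`. -/
theorem tree_into_c0 (h : ℕ) (hh : 1 ≤ h) :
    (∃ (f : TreeOmega h → ZeroAtInftyContinuousMap ℕ ℝ) (L C : ℝ),
      Function.Injective f ∧
      LipUB (tDist h) (fun a b : ZeroAtInftyContinuousMap ℕ ℝ => dist a b) f L ∧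
      CoLipUB (tDist h) (fun a b : ZeroAtInftyContinuousMap ℕ ℝ => dist a b) f C ∧
      L * C ≤ 2) ∧
    cDist (TreeOmega h) (ZeroAtInftyContinuousMap ℕ ℝ) (tDist h)
      (fun a b : ZeroAtInftyContinuousMap ℕ ℝ => dist a b) ≤ 2 := by
  obtain ⟨⟨f, hf, hL, hC⟩, hD⟩ := tree_into_c0_general
  exact ⟨⟨_, 1, 2, hf.comp Subtype.val_injective, hL.comp _, hC.comp _, (one_mul _).le⟩,
    (cDist_comp_le Subtype.val_injective).trans hD⟩

end
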